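/- Let 3 ≤ t ≤ d be integers, let G_1, G_2 be coprime homogeneous polynomials of degree d in κ[x_0,x_1,x_2] over an algebraically closed field κ, and let X ⊆ V(G_1,G_2) be a subscheme of length at most td + d − t + 1. Then the failure of X to impose independent conditions on degree-d forms satisfies g_X(d) ≤ binom(t−1,2). -/

import Mathlib

open MvPolynomial

/-- The degree-`k` graded piece `I_k` of an ideal `I` of `κ[x_0,x_1,x_2]`, as a
`κ`-subspace. -/
noncomputable def gradedIdealPiece (κ : Type*) [Field κ]
    (I : Ideal (MvPolynomial (Fin 3) κ)) (k : ℕ) :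
    Submodule κ (MvPolynomial (Fin 3) κ) :=
  Submodule.restrictScalars κ I ⊓ MvPolynomial.homogeneousSubmodule (Fin 3) κ k

/-!
Let `ℓ` be a general linear form, regular modulo both `J` and `(G₁, G₂)`. Restricting `J` to the
line `ℓ = 0` gives spaces of binary forms whose codimensions `h k` are the first differences of the
Hilbert function of `J`, so `g_X(d) = ∑ k > d, h k`.

Multiplying a nonzero space of binary forms by the two variables raises its dimension, and raises
it by exactly one only if the space consists of all multiples of a single form. Hence
`h (k + 1) ≤ h k` as soon as `h k ≤ k`, and, since the restrictions of `G₁` and `G₂` are coprime,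
`h` decreases strictly from degree `d - 1` on until it vanishes. If `h (d + 1) ≤ t - 2`, the tail is
at most `(t - 2) + (t - 3) + ⋯ = binom (t - 1) 2`. Otherwise `h (d - 1) ≥ t + 1`, hence
`h k ≥ min (k + 1) (t + 1)` for all `k < d`, and this head leaves at most `binom (t - 1) 2` of the
length to the tail.
-/

open Module

section Numerics

lemma sum_range_le_choose {h : ℕ → ℕ} (hstrict : ∀ k, h (k + 1) ≤ h k - 1) (n : ℕ) :
    ∑ i ∈ Finset.range n, h i ≤ (h 0 + 1).choose 2 := by
  induction n generalizing h with
  | zero => simp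
  | succ n ih =>
    have htail := (ih (h := fun i => h (i + 1)) fun k => hstrict (k + 1)).trans
      (Nat.choose_le_choose 2 (Nat.add_le_add_right (hstrict 0) 1))
    have hpascal : (h 0 + 1).choose 2 = (h 0 - 1 + 1).choose 2 + h 0 := by
      cases h 0 with
      | zero => rfl
      | succ m =>
        rw [Nat.add_sub_cancel, Nat.choose_succ_succ' (m + 1) 1, Nat.choose_one_right, add_comm]
    rw [Finset.sum_range_succ', hpascal]
    exact Nat.add_le_add_right htail _

lemma min_succ_apply_le {h : ℕ → ℕ} (hmono : ∀ k, h k = k + 1 ∨ h (k + 1) ≤ h k) {k e : ℕ}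
    (hke : k ≤ e) : min (k + 1) (h e) ≤ h k := by
  induction e, hke using Nat.le_induction with
  | base => exact min_le_right _ _
  | succ e hke ih => rcases hmono e with he | he <;> omega

lemma choose_add_mul_le_sum_range {h : ℕ → ℕ} {m n : ℕ}
    (hlow : ∀ k < m + n, min (k + 1) m ≤ h k) :
    (m + 1).choose 2 + m * n ≤ ∑ i ∈ Finset.range (m + n), h i := by
  rw [Finset.sum_range_add]
  refine Nat.add_le_add ?_ ?_
  · calc (m + 1).choose 2 = ∑ i ∈ Finset.range m, (i + 1) := by
          cases m with
          | zero => rfl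
          | succ m => simpa using (Nat.sum_range_add_choose m 1).symm
      _ ≤ ∑ i ∈ Finset.range m, h i := Finset.sum_le_sum fun i hi => by
          rw [Finset.mem_range] at hi
          simpa [Nat.succ_le_of_lt hi] using hlow i (by omega)
  · rw [mul_comm]
    simpa using Finset.card_nsmul_le_sum (Finset.range n) (fun i => h (m + i)) m fun i hi => by
      rw [Finset.mem_range] at hi
      exact (le_min (by omega) le_rfl).trans (hlow (m + i) (by omega))

lemma choose_two_add_succ_choose_two (n : ℕ) : n.choose 2 + (n + 1).choose 2 = n ^ 2 := by
  induction n with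
  | zero => rfl
  | succ n ih =>
    simp only [Nat.choose_succ_succ' _ 1, Nat.choose_one_right, Nat.reduceAdd] at ih ⊢
    linarith

-- If the tail starts at `h (d + 1) < s`, it is small because it decreases strictly; otherwise
-- `h (d - 1) ≥ s + 2`, so the head is already too large.
lemma sum_range_tail_le_choose {h : ℕ → ℕ} {s d n : ℕ} (hle : ∀ k, h k ≤ k + 1)
    (hmono : ∀ k, h k = k + 1 ∨ h (k + 1) ≤ h k)
    (hstrict : ∀ k, d ≤ k + 1 → h (k + 1) ≤ h k - 1)
    (hsum : ∑ i ∈ Finset.range (d + 1 + n), h i + s ≤ (s + 2) * d) :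
    ∑ i ∈ Finset.range n, h (d + 1 + i) ≤ s.choose 2 := by
  have htail := sum_range_le_choose (h := fun i => h (d + 1 + i))
    (fun k => hstrict (d + 1 + k) (by omega)) n
  simp only [add_zero] at htail
  by_cases hsmall : h (d + 1) ≤ s - 1
  · refine htail.trans ((Nat.choose_le_choose 2 (Nat.add_le_add_right hsmall 1)).trans_eq ?_)
    cases s <;> rfl
  have hd : s + 1 ≤ h d := by have := hstrict d (by omega); omega
  obtain ⟨e, rfl⟩ : ∃ e, d = e + 1 :=
    Nat.exists_eq_succ_of_ne_zero (by rintro rfl; have := hle 0; have := hstrict 0; omega)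
  have he : s + 2 ≤ h e := by have := hstrict e le_rfl; omega
  obtain ⟨m, hm⟩ : ∃ m, e + 1 = s + 2 + m := Nat.exists_eq_add_of_le (he.trans (hle e))
  have hhead : (s + 3).choose 2 + (s + 2) * m ≤ ∑ i ∈ Finset.range (e + 1), h i :=
    hm ▸ choose_add_mul_le_sum_range fun k hk =>
      (min_le_min_left _ he).trans (min_succ_apply_le hmono (by omega))
  rw [Finset.sum_range_add, Finset.sum_range_succ] at hsum
  have hchoose : (s + 3).choose 2 + (s + 1) + s + s.choose 2 = (s + 2) * (s + 2) := by
    have hsq := choose_two_add_succ_choose_two s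
    simp only [Nat.choose_succ_succ' _ 1, Nat.choose_one_right, Nat.reduceAdd] at hsq ⊢
    linarith
  have : (s + 2) * (e + 1) = (s + 2) * (s + 2) + (s + 2) * m := by rw [hm, mul_add]
  omega

end Numerics

lemma finrank_map_add_finrank_inf_ker {K V V' : Type*} [DivisionRing K] [AddCommGroup V]
    [Module K V] [AddCommGroup V'] [Module K V'] (f : V →ₗ[K] V') (A : Submodule K V)
    [FiniteDimensional K A] :
    finrank K (A.map f) + finrank K (A ⊓ LinearMap.ker f : Submodule K V) = finrank K A := by
  rw [← LinearMap.range_domRestrict, ← Submodule.map_comap_subtype,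
    (Submodule.equivMapOfInjective A.subtype A.subtype_injective _).symm.finrank_eq]
  exact (f.domRestrict A).finrank_range_add_finrank_ker

lemma finrank_map_mulLeft {K R : Type*} [Field K] [Ring R] [NoZeroDivisors R] [Algebra K R] {r : R}
    (hr : r ≠ 0) (W : Submodule K R) : finrank K (W.map (LinearMap.mulLeft K r)) = finrank K W :=
  (Submodule.equivMapOfInjective _ (mul_right_injective₀ hr) W).finrank_eq.symm

section RelPrime

variable {A : Type*} [CommRing A] [IsDomain A] [DecompositionMonoid A]

-- The Koszul complex of a coprime pair is exact in the middle.
lemma exists_eq_mul_of_mul_eq_mul {p q u v : A} (hpq : IsRelPrime p q) (h : p * u = q * v) :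
    ∃ c, u = q * c ∧ v = p * c := by
  rcases eq_or_ne q 0 with rfl | hq
  · have hp : IsUnit p := isRelPrime_zero_right.1 hpq
    obtain ⟨c, rfl⟩ := hp.dvd (a := v)
    exact ⟨c, by simpa [hp.ne_zero] using h, rfl⟩
  · obtain ⟨c, rfl⟩ := hpq.symm.dvd_of_dvd_mul_left ⟨v, h⟩
    exact ⟨c, rfl, mul_left_cancel₀ hq (by rw [← h, mul_left_comm])⟩

lemma dvd_of_dvd_mul_of_dvd_mul {p q f g : A} (hpq : IsRelPrime p q) (hp : f ∣ p * g)
    (hq : f ∣ q * g) : f ∣ g := by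
  obtain ⟨a, b, ha, ⟨r, rfl⟩, rfl⟩ := exists_dvd_and_dvd_of_dvd_mul hp
  rcases eq_or_ne b 0 with rfl | hb
  · simp
  have har : a ∣ q * r := by
    rwa [← mul_dvd_mul_iff_right hb, mul_assoc, mul_comm r b]
  rw [mul_comm a b]
  exact mul_dvd_mul_left b ((hpq.of_dvd_left ha).dvd_of_dvd_mul_left har)

-- `c` is the image of `f` under the linkage isomorphism
-- `((p, q) : (x, y)) / (p, q) ≅ ((x, y) : (p, q)) / (x, y)`.
lemma mem_span_pair_of_linked {x y p q a b a' b' f c : A} (hxy : IsRelPrime x y)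
    (hx : x * f = a * p + b * q) (hy : y * f = a' * p + b' * q)
    (hq : q * c = y * a - x * a') (hp : p * c = x * b' - y * b)
    (hc : c ∈ Ideal.span {x, y}) : f ∈ Ideal.span {p, q} := by
  obtain ⟨r, s, rfl⟩ := Ideal.mem_span_pair.1 hc
  obtain ⟨u, hu, hu'⟩ := exists_eq_mul_of_mul_eq_mul hxy
    (show x * (a' + q * r) = y * (a - q * s) by linear_combination hq)
  obtain ⟨v, hv, hv'⟩ := exists_eq_mul_of_mul_eq_mul hxy
    (show x * (b' - p * r) = y * (b + p * s) by linear_combination -hp)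
  refine Ideal.mem_span_pair.2 ⟨u, v, ?_⟩
  rcases hxy.ne_zero_or_ne_zero with h0 | h0
  · exact mul_left_cancel₀ h0 (by linear_combination -hx - p * hu' - q * hv')
  · exact mul_left_cancel₀ h0 (by linear_combination -hy - p * hu - q * hv)

lemma mem_span_pair_of_mul_mem {p q x y z f : A} (hpq : IsRelPrime p q) (hxy : IsRelPrime x y)
    (hz : ∀ c, z * c ∈ Ideal.span {x, y} → c ∈ Ideal.span {x, y})
    (hxf : x * f ∈ Ideal.span {p, q}) (hyf : y * f ∈ Ideal.span {p, q})
    (hzf : z * f ∈ Ideal.span {p, q}) : f ∈ Ideal.span {p, q} := by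
  obtain ⟨a, b, hx⟩ := Ideal.mem_span_pair.1 hxf
  obtain ⟨a', b', hy⟩ := Ideal.mem_span_pair.1 hyf
  obtain ⟨c, hc, hc'⟩ := exists_eq_mul_of_mul_eq_mul hpq
    (show p * (y * a - x * a') = q * (x * b' - y * b) by linear_combination y * hx - x * hy)
  refine mem_span_pair_of_linked hxy hx.symm hy.symm hc.symm hc'.symm (hz c ?_)
  refine mem_span_pair_of_linked (x := p) (y := q) (a := z * b') (b := -(z * b)) (a' := -(z * a'))
    (b' := z * a) (c := z * f) hpq ?_ ?_ ?_ ?_ hzf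
  · linear_combination -z * hc'
  · linear_combination -z * hc
  · linear_combination -z * hy
  · linear_combination -z * hx

lemma isRelPrime_map_of_isSMulRegular {B : Type*} [CommRing B] [IsDomain B] {π : A →+* B}
    (hπ : Function.Surjective π) {ℓ : A} (hker : RingHom.ker π = Ideal.span {ℓ}) {p q : A}
    (hpq : IsRelPrime p q) (hℓ : IsSMulRegular (A ⧸ Ideal.span {p, q}) ℓ) :
    IsRelPrime (π p) (π q) := by
  have hmem : ∀ {g}, π g = 0 ↔ ℓ ∣ g := fun {g} => by
    rw [← RingHom.mem_ker, hker, Ideal.mem_span_singleton]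
  rintro e ⟨u, hu⟩ ⟨v, hv⟩
  obtain ⟨U, rfl⟩ := hπ u
  obtain ⟨V, rfl⟩ := hπ v
  obtain ⟨w, hw⟩ : ℓ ∣ p * V - q * U := hmem.1 (by simp only [map_sub, map_mul, hu, hv]; ring)
  obtain ⟨r, s, hrs⟩ := Ideal.mem_span_pair.1 <|
    mem_of_isSMulRegular_quotient_of_smul_mem (r := ℓ) hℓ (x := w)
      (Ideal.mem_span_pair.2 ⟨V, -U, by rw [smul_eq_mul, ← hw]; ring⟩)
  obtain ⟨c, hVc, hUc⟩ := exists_eq_mul_of_mul_eq_mul hpq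
    (show p * (V - ℓ * r) = q * (U + ℓ * s) by linear_combination hw - ℓ * hrs)
  have hπℓ : π ℓ = 0 := hmem.2 dvd_rfl
  have hV : π V = e * π V * π c := by simpa [hπℓ, hv] using congrArg π hVc
  have hU : π U = e * π U * π c := by simpa [hπℓ, hu] using congrArg π hUc
  have hunit : ∀ {t}, t ≠ 0 → t = e * t * π c → IsUnit e := fun ht h =>
    .of_mul_eq_one (π c) (mul_left_cancel₀ ht (by linear_combination -h))
  by_contra he
  have hU0 : π U = 0 := by_contra fun h => he (hunit h hU)
  have hV0 : π V = 0 := by_contra fun h => he (hunit h hV)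
  have hℓunit : IsUnit ℓ :=
    hpq (hmem.1 (by rw [hu, hU0, mul_zero])) (hmem.1 (by rw [hv, hV0, mul_zero]))
  exact not_isUnit_zero (hπℓ ▸ hℓunit.map π)

end RelPrime

section Homogeneous

variable {K σ : Type*} [Field K]

lemma isHomogeneous_right_of_mul {p g : MvPolynomial σ K} {m k : ℕ} (hp0 : p ≠ 0)
    (hp : p.IsHomogeneous m) (hpg : (p * g).IsHomogeneous (m + k)) : g.IsHomogeneous k := by
  have := gradedAlgebra (σ := σ) (R := K)
  have hcomp := DirectSum.coe_decompose_mul_add_of_left_mem (homogeneousSubmodule σ K)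
    (j := k) (b := g) hp
  rw [DirectSum.decompose_of_mem_same _ hpg] at hcomp
  rw [mul_left_cancel₀ hp0 hcomp]
  exact (DirectSum.decompose (homogeneousSubmodule σ K) g k).2

lemma isRelPrime_X_X {i j : σ} (hij : i ≠ j) : IsRelPrime (X i : MvPolynomial σ K) (X j) := by
  rw [X_prime.irreducible.isRelPrime_iff_not_dvd, X_dvd_X]
  simpa using hij

lemma mem_span_X_image_of_X_mul_mem {s : Set σ} {i : σ} (hi : i ∉ s) {f : MvPolynomial σ K}
    (hf : X i * f ∈ Ideal.span (X '' s)) : f ∈ Ideal.span (X '' s) := by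
  rw [mem_ideal_span_X_image] at hf ⊢
  intro m hm
  obtain ⟨j, hj, hjm⟩ := hf (Finsupp.single i 1 + m) <| by
    rwa [MvPolynomial.mem_support_iff, coeff_X_mul, ← MvPolynomial.mem_support_iff]
  have hij : i ≠ j := fun h => hi (h ▸ hj)
  exact ⟨j, hj, by simpa [Finsupp.single_eq_of_ne, hij, hij.symm] using hjm⟩

lemma mem_span_pair_of_X_mul_mem {p q f : MvPolynomial (Fin 3) K} (hpq : IsRelPrime p q)
    (hf : ∀ i, X i * f ∈ Ideal.span {p, q}) : f ∈ Ideal.span {p, q} := by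
  refine mem_span_pair_of_mul_mem hpq (isRelPrime_X_X (by decide : (0 : Fin 3) ≠ 1)) ?_
    (hf 0) (hf 1) (hf 2)
  rw [← Set.image_pair]
  exact fun c => mem_span_X_image_of_X_mul_mem (by decide)

lemma finrank_homogeneousSubmodule (n k : ℕ) :
    finrank K (homogeneousSubmodule (Fin n) K k) = (n + k - 1).choose k := by
  have hset : {m : Fin n →₀ ℕ | m.degree = k} =
      ((Finset.univ.finsuppAntidiag k : Finset (Fin n →₀ ℕ)) : Set (Fin n →₀ ℕ)) := by
    ext m
    simp [Finsupp.degree_eq_sum]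
  rw [homogeneousSubmodule_eq_finsupp_supported, hset,
    (AddMonoidAlgebra.supportedEquivFinsupp _).finrank_eq, finrank_finsupp_self]
  simp [Finset.card_finsuppAntidiag_nat_eq_choose]

lemma finiteDimensional_of_le_homogeneousSubmodule [Finite σ] {k : ℕ}
    {W : Submodule K (MvPolynomial σ K)} (hW : W ≤ homogeneousSubmodule σ K k) :
    FiniteDimensional K W :=
  have : FiniteDimensional K (homogeneousSubmodule σ K k) :=
    Module.Finite.of_fg (homogeneousSubmodule_fg σ K k)
  Submodule.finiteDimensional_of_le hW

end Homogeneous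

section BinaryForms

variable {K σ : Type*} [Field K]

/-- The multiples by the variables of the elements of `W`: the space `R₁ W` of the theory of
Hilbert functions, where `R` is the polynomial ring. -/
noncomputable def mulVars (W : Submodule K (MvPolynomial σ K)) :
    Submodule K (MvPolynomial σ K) :=
  ⨆ i, W.map (LinearMap.mulLeft K (X i))

/-- The polynomials whose multiples by all variables lie in `W`: the space `W : R₁` of the theory
of Hilbert functions, where `R` is the polynomial ring. -/
noncomputable def divVars (W : Submodule K (MvPolynomial σ K)) :
    Submodule K (MvPolynomial σ K) :=
  ⨅ i, W.comap (LinearMap.mulLeft K (X i))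

lemma mulVars_le_iff {W V : Submodule K (MvPolynomial σ K)} :
    mulVars W ≤ V ↔ ∀ f ∈ W, ∀ i, X i * f ∈ V := by
  simp only [mulVars, iSup_le_iff, Submodule.map_le_iff_le_comap]
  exact ⟨fun h f hf i => h i hf, fun h i f hf => h f hf i⟩

lemma mem_divVars {W : Submodule K (MvPolynomial σ K)} {f : MvPolynomial σ K} :
    f ∈ divVars W ↔ ∀ i, X i * f ∈ W := by
  simp [divVars, Submodule.mem_iInf]

lemma mulVars_divVars_le (W : Submodule K (MvPolynomial σ K)) : mulVars (divVars W) ≤ W :=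
  mulVars_le_iff.2 fun _ hf => mem_divVars.1 hf

lemma dvd_of_mem_mulVars {W : Submodule K (MvPolynomial σ K)} {F g : MvPolynomial σ K}
    (hF : ∀ f ∈ W, F ∣ f) (hg : g ∈ mulVars W) : F ∣ g := by
  have hle : mulVars W ≤ (Ideal.span {F}).restrictScalars K :=
    mulVars_le_iff.2 fun f hf i => Ideal.mem_span_singleton.2 ((hF f hf).mul_left _)
  exact Ideal.mem_span_singleton.1 (hle hg)

lemma divVars_le [Nonempty σ] {W : Submodule K (MvPolynomial σ K)} {k : ℕ}
    (hW : W ≤ homogeneousSubmodule σ K (k + 1)) : divVars W ≤ homogeneousSubmodule σ K k :=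
  fun _ hf =>
    isHomogeneous_right_of_mul (X_ne_zero (Classical.arbitrary σ)) (isHomogeneous_X K _)
      (add_comm k 1 ▸ hW (mem_divVars.1 hf _))

lemma divVars_eq_bot [Nonempty σ] {W : Submodule K (MvPolynomial σ K)}
    (hW : W ≤ homogeneousSubmodule σ K 0) : divVars W = ⊥ := by
  refine (Submodule.eq_bot_iff _).2 fun f hf => by_contra fun hf0 => ?_
  have h := hW (mem_divVars.1 hf (Classical.arbitrary σ))
  rw [mem_homogeneousSubmodule, ← totalDegree_zero_iff_isHomogeneous,
    totalDegree_mul_of_isDomain (X_ne_zero _) hf0, totalDegree_X] at h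
  omega

lemma exists_dvd_of_finrank_le_one {W : Submodule K (MvPolynomial σ K)} [FiniteDimensional K W]
    (h : finrank K W ≤ 1) : ∃ F ∈ W, ∀ f ∈ W, F ∣ f := by
  obtain ⟨F, hF⟩ := finrank_le_one_iff.1 h
  refine ⟨F, F.2, fun f hf => ?_⟩
  obtain ⟨c, hc⟩ := hF ⟨f, hf⟩
  exact ⟨C c, by rw [mul_comm, ← smul_eq_C_mul, ← Submodule.coe_smul, hc]⟩

lemma map_X_inf_map_X (W : Submodule K (MvPolynomial (Fin 2) K)) :
    W.map (LinearMap.mulLeft K (X 0)) ⊓ W.map (LinearMap.mulLeft K (X 1)) =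
      (divVars W).map (LinearMap.mulLeft K (X 0 * X 1)) := by
  ext g
  constructor
  · rintro ⟨⟨a, ha, rfl⟩, b, hb, hab⟩
    obtain ⟨f, rfl, rfl⟩ :=
      exists_eq_mul_of_mul_eq_mul (isRelPrime_X_X (by decide : (0 : Fin 2) ≠ 1)) hab.symm
    exact ⟨f, mem_divVars.2 (Fin.forall_fin_two.2 ⟨hb, ha⟩), mul_assoc _ _ _⟩
  · rintro ⟨f, hf, rfl⟩
    exact ⟨⟨X 1 * f, mem_divVars.1 hf 1, (mul_assoc _ _ _).symm⟩,
      ⟨X 0 * f, mem_divVars.1 hf 0, (mul_left_comm _ _ _).trans (mul_assoc _ _ _).symm⟩⟩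

lemma mulVars_eq_sup (W : Submodule K (MvPolynomial (Fin 2) K)) :
    mulVars W = W.map (LinearMap.mulLeft K (X 0)) ⊔ W.map (LinearMap.mulLeft K (X 1)) :=
  le_antisymm (iSup_le (Fin.forall_fin_two.2 ⟨le_sup_left, le_sup_right⟩))
    (sup_le (le_iSup_of_le 0 le_rfl) (le_iSup_of_le 1 le_rfl))

lemma finrank_mulVars_add_finrank_divVars (W : Submodule K (MvPolynomial (Fin 2) K))
    [FiniteDimensional K W] :
    finrank K (mulVars W) + finrank K (divVars W) = 2 * finrank K W := by
  have h := Submodule.finrank_sup_add_finrank_inf_eq (W.map (LinearMap.mulLeft K (X 0)))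
    (W.map (LinearMap.mulLeft K (X 1)))
  rw [map_X_inf_map_X, finrank_map_mulLeft (mul_ne_zero (X_ne_zero 0) (X_ne_zero 1)),
    finrank_map_mulLeft (X_ne_zero 0), finrank_map_mulLeft (X_ne_zero 1)] at h
  rw [mulVars_eq_sup, two_mul, h]

lemma finrank_lt_finrank_mulVars {k : ℕ} {W : Submodule K (MvPolynomial (Fin 2) K)}
    (hW : W ≤ homogeneousSubmodule (Fin 2) K k) (hW0 : W ≠ ⊥) :
    finrank K W < finrank K (mulVars W) := by
  have := finiteDimensional_of_le_homogeneousSubmodule hW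
  have hpos : 0 < finrank K W := Nat.pos_of_ne_zero (mt Submodule.finrank_eq_zero.1 hW0)
  have hsum := finrank_mulVars_add_finrank_divVars W
  suffices finrank K (divVars W) < finrank K W by omega
  by_cases hdiv : divVars W = ⊥
  · rwa [hdiv, finrank_bot]
  cases k with
  | zero => exact absurd (divVars_eq_bot hW) hdiv
  | succ k =>
    exact (finrank_lt_finrank_mulVars (divVars_le hW) hdiv).trans_le
      (Submodule.finrank_mono (mulVars_divVars_le W))

lemma exists_dvd_of_finrank_mulVars_eq {k : ℕ} {W : Submodule K (MvPolynomial (Fin 2) K)}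
    (hW : W ≤ homogeneousSubmodule (Fin 2) K k)
    (heq : finrank K (mulVars W) = finrank K W + 1) :
    ∃ F : MvPolynomial (Fin 2) K, F.IsHomogeneous (k + 1 - finrank K W) ∧ ∀ f ∈ W, F ∣ f := by
  have := finiteDimensional_of_le_homogeneousSubmodule hW
  have hsum := finrank_mulVars_add_finrank_divVars W
  by_cases hdiv : divVars W = ⊥
  · rw [hdiv, finrank_bot] at hsum
    have hone : finrank K W = 1 := by omega
    obtain ⟨F, hF, hdvd⟩ := exists_dvd_of_finrank_le_one hone.le
    exact ⟨F, by simpa [hone] using hW hF, hdvd⟩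
  cases k with
  | zero => exact absurd (divVars_eq_bot hW) hdiv
  | succ k =>
    have hlt := finrank_lt_finrank_mulVars (divVars_le hW) hdiv
    have hle := Submodule.finrank_mono (mulVars_divVars_le W)
    obtain ⟨F, hF, hdvd⟩ := exists_dvd_of_finrank_mulVars_eq (divVars_le hW) (by omega)
    have hdeg : k + 1 - finrank K (divVars W) = k + 1 + 1 - finrank K W := by omega
    refine ⟨F, hdeg ▸ hF, fun f hf => ?_⟩
    rw [← Submodule.eq_of_le_of_finrank_eq (mulVars_divVars_le W) (by omega)] at hf
    exact dvd_of_mem_mulVars hdvd hf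

lemma exists_dvd_of_finrank_le_succ {k : ℕ} {W V : Submodule K (MvPolynomial (Fin 2) K)}
    (hW : W ≤ homogeneousSubmodule (Fin 2) K k) (hV : V ≤ homogeneousSubmodule (Fin 2) K (k + 1))
    (hWV : mulVars W ≤ V) (hdim : finrank K V ≤ finrank K W + 1) :
    ∃ F : MvPolynomial (Fin 2) K, F.IsHomogeneous (k + 1 - finrank K W) ∧ ∀ f ∈ V, F ∣ f := by
  have := finiteDimensional_of_le_homogeneousSubmodule hV
  rcases eq_or_ne W ⊥ with rfl | hW0
  · rw [finrank_bot, zero_add] at hdim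
    obtain ⟨F, hF, hdvd⟩ := exists_dvd_of_finrank_le_one hdim
    exact ⟨F, by simpa using hV hF, hdvd⟩
  · have hlt := finrank_lt_finrank_mulVars hW hW0
    have hle := Submodule.finrank_mono hWV
    obtain ⟨F, hF, hdvd⟩ := exists_dvd_of_finrank_mulVars_eq hW (by omega)
    refine ⟨F, hF, fun f hf => ?_⟩
    rw [← Submodule.eq_of_le_of_finrank_eq hWV (by omega)] at hf
    exact dvd_of_mem_mulVars hdvd hf

end BinaryForms

section RegularLinearForm

variable {K : Type*} [Field K]

lemma exists_isSMulRegular_notMem {S V M : Type*} [Infinite K] [CommRing S] [IsNoetherianRing S]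
    [Algebra K S] [AddCommGroup V] [Module K V] [AddCommGroup M] [Module S M] [Module.Finite S M]
    (lin : V →ₗ[K] S) {H : Submodule K V} (hH : H ≠ ⊤)
    (hM : ∀ m : M, (∀ v, lin v • m = 0) → m = 0) :
    ∃ v ∉ H, IsSMulRegular M (lin v) := by
  classical
  let E (P : Ideal S) : Submodule K V := (P.restrictScalars K).comap lin
  have hE : ∀ P ∈ associatedPrimes S M, E P ≠ ⊤ := by
    intro P hP htop
    obtain ⟨hprime, m, hPm⟩ := isAssociatedPrime_iff.1 hP
    have hmem (s : S) : s ∈ P ↔ s • m = 0 := by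
      rw [hPm, Submodule.mem_colon_singleton, Submodule.mem_bot]
    have hm : m = 0 := hM m fun v => (hmem _).1 (htop ▸ Submodule.mem_top : v ∈ E P)
    exact hprime.ne_top ((Ideal.eq_top_iff_one P).2 ((hmem 1).2 (by rw [hm, smul_zero])))
  have hfin := associatedPrimes.finite S M
  have htop : ⊤ ∉ insert H (hfin.toFinset.image E) := by
    simpa [hH.symm, not_or] using fun P hP => hE P hP
  obtain ⟨v, hv⟩ :=
    (Set.ne_univ_iff_exists_notMem _).1 (Subspace.biUnion_ne_univ_of_top_notMem htop)
  simp only [Finset.mem_insert, Finset.mem_image, Set.Finite.mem_toFinset, Set.mem_iUnion,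
    not_exists] at hv
  refine ⟨v, hv H (Or.inl rfl), by_contra fun hreg => ?_⟩
  have hmem : lin v ∈ ⋃ P ∈ associatedPrimes S M, (P : Set S) := by
    rwa [biUnion_associatedPrimes_eq_compl_regular]
  obtain ⟨P, hP, hvP⟩ := Set.mem_iUnion₂.1 hmem
  exact hv (E P) (Or.inr ⟨P, hP, rfl⟩) hvP

/-- The equation `x₂ - (a x₀ + b x₁)` of a line of `ℙ²` that does not pass through `(0 : 0 : 1)`. -/
noncomputable def lineForm (a b : K) : MvPolynomial (Fin 3) K :=
  X 2 - (C a * X 0 + C b * X 1)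

lemma isHomogeneous_lineForm (a b : K) : (lineForm a b).IsHomogeneous 1 :=
  (isHomogeneous_X K 2).sub ((isHomogeneous_C_mul_X a 0).add (isHomogeneous_C_mul_X b 1))

lemma lineForm_ne_zero (a b : K) : lineForm a b ≠ 0 := fun h => by
  simpa [lineForm] using congrArg (eval ![0, 0, 1]) h

lemma exists_isSMulRegular_lineForm [Infinite K] {M : Type*} [AddCommGroup M]
    [Module (MvPolynomial (Fin 3) K) M] [Module.Finite (MvPolynomial (Fin 3) K) M]
    (hM : ∀ m : M, (∀ i, (X i : MvPolynomial (Fin 3) K) • m = 0) → m = 0) :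
    ∃ a b : K, IsSMulRegular M (lineForm a b) := by
  let lin : (Fin 3 → K) →ₗ[K] MvPolynomial (Fin 3) K := Fintype.linearCombination K X
  have hlin : ∀ v, v 2 ≠ 0 → lin v = C (v 2) * lineForm (-(v 0 / v 2)) (-(v 1 / v 2)) := by
    intro v hv
    have h (i) : C (v 2) * C (v i / v 2) = (C (v i) : MvPolynomial (Fin 3) K) := by
      rw [← C_mul, mul_div_cancel₀ _ hv]
    simp only [lin, lineForm, Fintype.linearCombination_apply, Fin.sum_univ_three, smul_eq_C_mul,
      C_neg]
    linear_combination -X 0 * h 0 - X 1 * h 1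
  have hker : LinearMap.ker (LinearMap.proj 2 : (Fin 3 → K) →ₗ[K] K) ≠ ⊤ := fun h => by
    simpa using LinearMap.congr_fun (LinearMap.ker_eq_top.1 h) (Pi.single 2 1)
  obtain ⟨v, hv, hreg⟩ := exists_isSMulRegular_notMem lin hker fun m hm =>
    hM m fun i => by simpa [lin, Fintype.linearCombination_apply_single] using hm (Pi.single i 1)
  rw [hlin v hv] at hreg
  exact ⟨_, _, hreg.of_mul⟩

lemma eq_zero_of_forall_X_smul_eq_zero {σ : Type*} {J : Ideal (MvPolynomial σ K)}
    (hJ : ∀ f, (∀ i, X i * f ∈ J) → f ∈ J) (m : MvPolynomial σ K ⧸ J)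
    (hm : ∀ i, (X i : MvPolynomial σ K) • m = 0) : m = 0 := by
  obtain ⟨f, rfl⟩ := Ideal.Quotient.mk_surjective m
  exact Ideal.Quotient.eq_zero_iff_mem.2
    (hJ f fun i => Ideal.Quotient.eq_zero_iff_mem.1 (hm i))

lemma exists_isSMulRegular_quotient_lineForm [Infinite K] {I J : Ideal (MvPolynomial (Fin 3) K)}
    (hI : ∀ f, (∀ i, X i * f ∈ I) → f ∈ I) (hJ : ∀ f, (∀ i, X i * f ∈ J) → f ∈ J) :
    ∃ a b : K, IsSMulRegular (MvPolynomial (Fin 3) K ⧸ I) (lineForm a b) ∧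
      IsSMulRegular (MvPolynomial (Fin 3) K ⧸ J) (lineForm a b) := by
  simp only [← Prod.isSMulRegular_iff]
  refine exists_isSMulRegular_lineForm fun m hm => Prod.ext ?_ ?_
  · exact eq_zero_of_forall_X_smul_eq_zero hI m.1 fun i => congrArg Prod.fst (hm i)
  · exact eq_zero_of_forall_X_smul_eq_zero hJ m.2 fun i => congrArg Prod.snd (hm i)

end RegularLinearForm

section Restriction

variable {K : Type*} [Field K]

/-- Restriction of ternary polynomials to the line `x₂ = a x₀ + b x₁`, with `x₀, x₁` as
coordinates on the line. -/
noncomputable def restrictLine (a b : K) : MvPolynomial (Fin 3) K →ₐ[K] MvPolynomial (Fin 2) K :=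
  aeval ![X 0, X 1, C a * X 0 + C b * X 1]

/-- The inclusion of the polynomials in `x₀, x₁`, a section of every `restrictLine a b`. -/
noncomputable def liftLine : MvPolynomial (Fin 2) K →ₐ[K] MvPolynomial (Fin 3) K :=
  aeval ![X 0, X 1]

lemma restrictLine_liftLine (a b : K) (g : MvPolynomial (Fin 2) K) :
    restrictLine a b (liftLine g) = g := by
  have h : (restrictLine a b).comp liftLine = AlgHom.id K _ := by
    ext i
    fin_cases i <;> simp [restrictLine, liftLine]
  exact DFunLike.congr_fun h g

lemma isHomogeneous_restrictLine (a b : K) {f : MvPolynomial (Fin 3) K} {k : ℕ}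
    (hf : f.IsHomogeneous k) : (restrictLine a b f).IsHomogeneous k := by
  rw [← one_mul k]
  refine hf.aeval _ fun i => ?_
  fin_cases i
  · exact isHomogeneous_X K 0
  · exact isHomogeneous_X K 1
  · exact (isHomogeneous_C_mul_X a 0).add (isHomogeneous_C_mul_X b 1)

lemma ker_restrictLine (a b : K) :
    RingHom.ker (restrictLine a b) = Ideal.span {lineForm a b} := by
  refine le_antisymm (fun f hf => ?_) ?_
  · have h : (Ideal.Quotient.mkₐ K (Ideal.span {lineForm a b})).comp
        (liftLine.comp (restrictLine a b)) = Ideal.Quotient.mkₐ K (Ideal.span {lineForm a b}) := by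
      ext i
      fin_cases i
      · simp [restrictLine, liftLine]
      · simp [restrictLine, liftLine]
      · refine (Ideal.Quotient.eq.2 ?_).symm
        rw [Ideal.mem_span_singleton]
        simp [restrictLine, liftLine, lineForm]
    have hf' := DFunLike.congr_fun h f
    rw [AlgHom.comp_apply, AlgHom.comp_apply, (RingHom.mem_ker).1 hf, map_zero, map_zero] at hf'
    exact Ideal.Quotient.eq_zero_iff_mem.1 hf'.symm
  · rw [Ideal.span_singleton_le_iff_mem, RingHom.mem_ker]
    simp [restrictLine, lineForm]

lemma restrictLine_eq_zero_iff {a b : K} {f : MvPolynomial (Fin 3) K} :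
    restrictLine a b f = 0 ↔ lineForm a b ∣ f := by
  rw [← RingHom.mem_ker, ker_restrictLine, Ideal.mem_span_singleton]

lemma isRelPrime_restrictLine {a b : K} {p q : MvPolynomial (Fin 3) K} (hpq : IsRelPrime p q)
    (hreg : IsSMulRegular (MvPolynomial (Fin 3) K ⧸ Ideal.span {p, q}) (lineForm a b)) :
    IsRelPrime (restrictLine a b p) (restrictLine a b q) :=
  isRelPrime_map_of_isSMulRegular (π := (restrictLine a b : _ →+* _))
    (fun g => ⟨liftLine g, restrictLine_liftLine a b g⟩) (ker_restrictLine a b) hpq hreg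

end Restriction

section HilbertFunction

variable {K : Type*} [Field K] {a b : K} {J : Ideal (MvPolynomial (Fin 3) K)} {k : ℕ}

lemma gradedIdealPiece_le (J : Ideal (MvPolynomial (Fin 3) K)) (k : ℕ) :
    gradedIdealPiece K J k ≤ homogeneousSubmodule (Fin 3) K k :=
  inf_le_right

lemma finrank_gradedIdealPiece_le (J : Ideal (MvPolynomial (Fin 3) K)) (k : ℕ) :
    finrank K (gradedIdealPiece K J k) ≤ (k + 2).choose 2 := by
  have := finiteDimensional_of_le_homogeneousSubmodule (le_refl (homogeneousSubmodule (Fin 3) K k))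
  refine (Submodule.finrank_mono (gradedIdealPiece_le J k)).trans_eq ?_
  rw [finrank_homogeneousSubmodule, show 3 + k - 1 = k + 2 by omega, Nat.choose_symm_add]

/-- The Hilbert function `k ↦ dim S_k(X)` of the subscheme `X` of `ℙ²` with ideal `J`. -/
noncomputable def hilbertFunction (J : Ideal (MvPolynomial (Fin 3) K)) (k : ℕ) : ℕ :=
  (k + 2).choose 2 - finrank K (gradedIdealPiece K J k)

/-- The image in binary forms of the degree-`k` piece of `J` under restriction to the line
`x₂ = a x₀ + b x₁`. -/
noncomputable def restrictedPiece (a b : K) (J : Ideal (MvPolynomial (Fin 3) K)) (k : ℕ) :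
    Submodule K (MvPolynomial (Fin 2) K) :=
  (gradedIdealPiece K J k).map (restrictLine a b).toLinearMap

/-- The Hilbert function of the section of `J` by the line `x₂ = a x₀ + b x₁`. When the line is
general it is the first difference of `hilbertFunction J`, the `h`-vector of `J`. -/
noncomputable def hVector (a b : K) (J : Ideal (MvPolynomial (Fin 3) K)) (k : ℕ) : ℕ :=
  k + 1 - finrank K (restrictedPiece a b J k)

variable (a b J k) in
lemma restrictedPiece_le : restrictedPiece a b J k ≤ homogeneousSubmodule (Fin 2) K k := by
  rintro _ ⟨f, hf, rfl⟩
  exact isHomogeneous_restrictLine a b (gradedIdealPiece_le J k hf)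

variable (a b J k) in
lemma finrank_restrictedPiece_le : finrank K (restrictedPiece a b J k) ≤ k + 1 := by
  have := finiteDimensional_of_le_homogeneousSubmodule (le_refl (homogeneousSubmodule (Fin 2) K k))
  refine (Submodule.finrank_mono (restrictedPiece_le a b J k)).trans_eq ?_
  rw [finrank_homogeneousSubmodule, show 2 + k - 1 = k + 1 by omega, Nat.choose_succ_self_right]

lemma restrictLine_mem_restrictedPiece {f : MvPolynomial (Fin 3) K} (hfJ : f ∈ J)
    (hf : f.IsHomogeneous k) : restrictLine a b f ∈ restrictedPiece a b J k :=
  ⟨f, ⟨hfJ, hf⟩, rfl⟩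

lemma X_mul_mem_restrictedPiece {f : MvPolynomial (Fin 2) K} (hf : f ∈ restrictedPiece a b J k)
    (i : Fin 2) : X i * f ∈ restrictedPiece a b J (k + 1) := by
  obtain ⟨g, hg, rfl⟩ := hf
  have hX : restrictLine a b (X i.castSucc) = X i := by fin_cases i <;> simp [restrictLine]
  rw [AlgHom.toLinearMap_apply, ← hX, ← map_mul]
  exact restrictLine_mem_restrictedPiece (J.mul_mem_left _ hg.1)
    (add_comm k 1 ▸ (isHomogeneous_X K _).mul hg.2)

lemma X_pow_mul_mem_restrictedPiece {f : MvPolynomial (Fin 2) K}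
    (hf : f ∈ restrictedPiece a b J k) (i : Fin 2) (n : ℕ) :
    X i ^ n * f ∈ restrictedPiece a b J (k + n) := by
  induction n with
  | zero => simpa using hf
  | succ n ih =>
    rw [pow_succ', mul_assoc]
    exact X_mul_mem_restrictedPiece ih i

variable (a b J k) in
lemma mulVars_restrictedPiece_le :
    mulVars (restrictedPiece a b J k) ≤ restrictedPiece a b J (k + 1) :=
  mulVars_le_iff.2 fun _ hf => X_mul_mem_restrictedPiece hf

lemma gradedIdealPiece_inf_ker_restrictLine
    (hreg : IsSMulRegular (MvPolynomial (Fin 3) K ⧸ J) (lineForm a b)) (k : ℕ) :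
    gradedIdealPiece K J (k + 1) ⊓ LinearMap.ker (restrictLine a b).toLinearMap =
      (gradedIdealPiece K J k).map (LinearMap.mulLeft K (lineForm a b)) := by
  ext f
  constructor
  · rintro ⟨⟨hfJ, hfk⟩, hf0⟩
    obtain ⟨g, rfl⟩ := restrictLine_eq_zero_iff.1 hf0
    rw [add_comm] at hfk
    exact ⟨g, ⟨mem_of_isSMulRegular_quotient_of_smul_mem hreg hfJ,
      isHomogeneous_right_of_mul (lineForm_ne_zero a b) (isHomogeneous_lineForm a b) hfk⟩, rfl⟩
  · rintro ⟨g, ⟨hgJ, hgk⟩, rfl⟩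
    exact ⟨⟨J.mul_mem_left _ hgJ, add_comm k 1 ▸ (isHomogeneous_lineForm a b).mul hgk⟩,
      restrictLine_eq_zero_iff.2 ⟨g, rfl⟩⟩

lemma finrank_gradedIdealPiece_succ
    (hreg : IsSMulRegular (MvPolynomial (Fin 3) K ⧸ J) (lineForm a b)) (k : ℕ) :
    finrank K (gradedIdealPiece K J (k + 1)) =
      finrank K (restrictedPiece a b J (k + 1)) + finrank K (gradedIdealPiece K J k) := by
  have := finiteDimensional_of_le_homogeneousSubmodule (gradedIdealPiece_le J (k + 1))
  rw [← finrank_map_add_finrank_inf_ker (restrictLine a b).toLinearMap,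
    gradedIdealPiece_inf_ker_restrictLine hreg,
    finrank_map_mulLeft (lineForm_ne_zero a b), restrictedPiece]

variable (a b J) in
lemma finrank_gradedIdealPiece_zero :
    finrank K (gradedIdealPiece K J 0) = finrank K (restrictedPiece a b J 0) := by
  have := finiteDimensional_of_le_homogeneousSubmodule (gradedIdealPiece_le J 0)
  have hbot : gradedIdealPiece K J 0 ⊓ LinearMap.ker (restrictLine a b).toLinearMap = ⊥ := by
    refine (Submodule.eq_bot_iff _).2 fun f hf => ?_
    obtain ⟨c, rfl⟩ : ∃ c, f = C c :=
      ⟨_, totalDegree_eq_zero_iff_eq_C.1 ((totalDegree_zero_iff_isHomogeneous _).2 hf.1.2)⟩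
    simpa [restrictLine] using hf.2
  rw [← finrank_map_add_finrank_inf_ker (restrictLine a b).toLinearMap, hbot, finrank_bot,
    add_zero, restrictedPiece]

lemma hilbertFunction_eq_sum_hVector
    (hreg : IsSMulRegular (MvPolynomial (Fin 3) K ⧸ J) (lineForm a b)) (k : ℕ) :
    hilbertFunction J k = ∑ i ∈ Finset.range (k + 1), hVector a b J i := by
  induction k with
  | zero => simp [hilbertFunction, hVector, finrank_gradedIdealPiece_zero a b]
  | succ k ih =>
    have hle := finrank_gradedIdealPiece_le J k
    have hle' := finrank_restrictedPiece_le a b J (k + 1)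
    have hpascal : (k + 1 + 2).choose 2 = k + 2 + (k + 2).choose 2 := by
      rw [Nat.choose_succ_succ' (k + 2) 1, Nat.choose_one_right]
    rw [Finset.sum_range_succ, ← ih, hilbertFunction, hilbertFunction, hVector, hpascal,
      finrank_gradedIdealPiece_succ hreg]
    omega

variable (a b J k) in
lemma hVector_le : hVector a b J k ≤ k + 1 :=
  Nat.sub_le _ _

variable (a b J k) in
lemma hVector_succ_le : hVector a b J k = k + 1 ∨ hVector a b J (k + 1) ≤ hVector a b J k := by
  refine or_iff_not_imp_left.2 fun hne => ?_
  have hbot : restrictedPiece a b J k ≠ ⊥ := fun h =>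
    hne (by rw [hVector, h, finrank_bot, Nat.sub_zero])
  have := finiteDimensional_of_le_homogeneousSubmodule (restrictedPiece_le a b J (k + 1))
  have hlt := finrank_lt_finrank_mulVars (restrictedPiece_le a b J k) hbot
  have hle := Submodule.finrank_mono (mulVars_restrictedPiece_le a b J k)
  simp only [hVector]
  omega

lemma dvd_of_forall_dvd_restrictedPiece {d : ℕ} {F g : MvPolynomial (Fin 2) K}
    (hdk : d ≤ k) (hF : ∀ f ∈ restrictedPiece a b J k, F ∣ f)
    (hg : g ∈ restrictedPiece a b J d) : F ∣ g := by
  obtain ⟨n, rfl⟩ := Nat.exists_eq_add_of_le hdk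
  exact dvd_of_dvd_mul_of_dvd_mul (isRelPrime_X_X (by decide : (0 : Fin 2) ≠ 1)).pow
    (hF _ (X_pow_mul_mem_restrictedPiece hg 0 n)) (hF _ (X_pow_mul_mem_restrictedPiece hg 1 n))

-- If `h (k + 1) ≥ h k > 0`, then the degree-`(k + 1)` forms have a common factor of degree `h k`,
-- which then divides the coprime pair as well.
lemma hVector_succ_le_sub_one {d : ℕ} {g₁ g₂ : MvPolynomial (Fin 2) K}
    (hg₁ : g₁ ∈ restrictedPiece a b J d) (hg₂ : g₂ ∈ restrictedPiece a b J d)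
    (hcop : IsRelPrime g₁ g₂) (hdk : d ≤ k + 1) : hVector a b J (k + 1) ≤ hVector a b J k - 1 := by
  by_contra! hlt
  have hmono := hVector_succ_le a b J k
  have hdim : finrank K (restrictedPiece a b J (k + 1)) ≤
      finrank K (restrictedPiece a b J k) + 1 := by
    have hle := finrank_restrictedPiece_le a b J (k + 1)
    simp only [hVector] at hlt
    omega
  obtain ⟨F, hF, hdvd⟩ := exists_dvd_of_finrank_le_succ (restrictedPiece_le a b J k)
    (restrictedPiece_le a b J (k + 1)) (mulVars_restrictedPiece_le a b J k) hdim
  have hunit : IsUnit F := hcop (dvd_of_forall_dvd_restrictedPiece hdk hdvd hg₁)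
    (dvd_of_forall_dvd_restrictedPiece hdk hdvd hg₂)
  have hdeg : hVector a b J k = 0 :=
    (hF.totalDegree hunit.ne_zero).symm.trans (isUnit_iff_totalDegree_of_isReduced.1 hunit).2
  omega

end HilbertFunction

theorem failure_le_choose_general {K : Type*} [Field K] [Infinite K] {t d k : ℕ} (ht : 1 ≤ t)
    {G₁ G₂ : MvPolynomial (Fin 3) K} (hG₁ : G₁.IsHomogeneous d) (hG₂ : G₂.IsHomogeneous d)
    (hcop : IsRelPrime G₁ G₂) {J : Ideal (MvPolynomial (Fin 3) K)}
    (hJsub : Ideal.span {G₁, G₂} ≤ J) (hJsat : ∀ f, (∀ i, X i * f ∈ J) → f ∈ J)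
    (hlen : hilbertFunction J k + t ≤ t * d + d + 1) :
    hilbertFunction J k ≤ hilbertFunction J d + (t - 1).choose 2 := by
  obtain ⟨a, b, hregG, hregJ⟩ := exists_isSMulRegular_quotient_lineForm
    (fun _ => mem_span_pair_of_X_mul_mem hcop) hJsat
  have hG : ∀ G ∈ ({G₁, G₂} : Set _), G.IsHomogeneous d →
      restrictLine a b G ∈ restrictedPiece a b J d := fun G hmem =>
    restrictLine_mem_restrictedPiece (hJsub (Ideal.subset_span hmem))
  have hstrict (i : ℕ) (hi : d ≤ i + 1) : hVector a b J (i + 1) ≤ hVector a b J i - 1 :=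
    hVector_succ_le_sub_one (hG G₁ (by simp) hG₁) (hG G₂ (by simp) hG₂)
      (isRelPrime_restrictLine hcop hregG) hi
  simp only [hilbertFunction_eq_sum_hVector hregJ] at hlen ⊢
  rcases le_total k d with hkd | hdk
  · exact le_add_right (Finset.sum_le_sum_of_subset (Finset.range_mono (by omega)))
  obtain ⟨n, rfl⟩ := Nat.exists_eq_add_of_le hdk
  obtain ⟨s, rfl⟩ := Nat.exists_eq_add_of_le' ht
  rw [add_right_comm] at hlen ⊢
  rw [Finset.sum_range_add _ (d + 1), Nat.add_sub_cancel]
  refine Nat.add_le_add_left (sum_range_tail_le_choose (hVector_le a b J) (hVector_succ_le a b J)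
    hstrict ?_) _
  linarith

/-- Let `3 ≤ t ≤ d`, let `G₁, G₂` be coprime degree-`d` forms in `κ[x_0,x_1,x_2]`
over an algebraically closed field, and let `X ⊆ V(G₁,G₂)` be a subscheme, given
by a saturated homogeneous ideal `J ⊇ (G₁,G₂)`, of length `L ≤ td + d − t + 1`
(the length being the eventually constant value of the Hilbert function
`k ↦ C(k+2,2) − dim J_k`). Then the failure of `X` to impose independent
conditions on degree-`d` forms satisfies
`g_X(d) = L − (C(d+2,2) − dim J_d) ≤ C(t−1,2)`. -/
theorem failure_le_choose
    (κ : Type*) [Field κ] [IsAlgClosed κ] (t d : ℕ) (ht : 3 ≤ t) (htd : t ≤ d)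
    (G₁ G₂ : MvPolynomial (Fin 3) κ) (hG₁0 : G₁ ≠ 0) (hG₂0 : G₂ ≠ 0)
    (hG₁ : G₁.IsHomogeneous d) (hG₂ : G₂.IsHomogeneous d) (hcop : IsRelPrime G₁ G₂)
    (J : Ideal (MvPolynomial (Fin 3) κ)) (hJsub : Ideal.span {G₁, G₂} ≤ J)
    (hJhom : ∀ f ∈ J, ∀ k : ℕ, MvPolynomial.homogeneousComponent k f ∈ J)
    (hJsat : ∀ f : MvPolynomial (Fin 3) κ,
      (∃ n : ℕ, ∀ i : Fin 3, (MvPolynomial.X i) ^ n * f ∈ J) → f ∈ J)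
    (L N : ℕ)
    (hL : ∀ k : ℕ, N ≤ k →
      Nat.choose (k + 2) 2 - Module.finrank κ (gradedIdealPiece κ J k) = L)
    (hlen : L ≤ t * d + d - t + 1) :
    (L : ℤ) - ((Nat.choose (d + 2) 2 : ℤ)
        - Module.finrank κ (gradedIdealPiece κ J d))
      ≤ Nat.choose (t - 1) 2 := by
  have hgen := failure_le_choose_general (k := N) (by omega : 1 ≤ t) hG₁ hG₂ hcop hJsub
    (fun f hf => hJsat f ⟨1, by simpa using hf⟩) (by rw [hilbertFunction, hL N le_rfl]; omega)
  rw [hilbertFunction, hilbertFunction, hL N le_rfl] at hgen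
  have hle := finrank_gradedIdealPiece_le J d
  omega
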